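/- arXiv:math/0612327 — 2 statements merged into one kernel-verified Lean document; each statement's English description precedes it below -/
import Mathlib

section
/- Let R be a commutative ring, M and N two R-modules, and n a natural number. There is an R-linear isomorphism between the n-th exterior power of the product module M × N and the direct sum, over pairs (p, q) of natural numbers with p + q = n, of the tensor products (⋀^p M) ⊗[R] (⋀^q N). -/
/-!
The exterior algebra is the Clifford algebra of the zero form, and Clifford algebras turn orthogonal
sums into graded tensor products; hence `a ⊗ b ↦ a ∧ b` identifies `⋀ M ⊗ ⋀ N` with `⋀ (M × N)`.
Expanding `⋀ M ⊗ ⋀ N` along both gradings writes `⋀ (M × N)` as the direct sum of all the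
`⋀^p M ⊗ ⋀^q N`; since the `(p, q)` summand lands in degree `p + q`, the summands with `p + q = n`
make up exactly the homogeneous component of degree `n`.
-/

open scoped TensorProduct DirectSum

section HomogeneousPart

variable {R A ι κ : Type*} [Semiring R] [AddCommMonoid A] [Module R A] [DecidableEq ι]
  {X : ι → Type*} [∀ i, AddCommMonoid (X i)] [∀ i, Module R (X i)]
  {𝒜 : κ → Submodule R A} {d : ι → κ} {f : ∀ i, X i →ₗ[R] A}

/-- The part of degree `n` of the map `⨁ i, X i → A` with components `f i`, when the summand `X i`
is placed in degree `d i` and `f` respects degrees. -/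
def homogeneousPart (hf : ∀ i x, f i x ∈ 𝒜 (d i)) (n : κ) :
    (⨁ i : {i // d i = n}, X i) →ₗ[R] 𝒜 n :=
  DirectSum.toModule R _ _ fun i => (f i).codRestrict (𝒜 n) (by simpa only [i.2] using hf i)

theorem homogeneousPart_lof (hf : ∀ i x, f i x ∈ 𝒜 (d i)) (i : ι) (x : X i) :
    homogeneousPart hf (d i) (DirectSum.lof R {j // d j = d i} (fun j => X j) ⟨i, rfl⟩ x) =
      ⟨f i x, hf i x⟩ :=
  DirectSum.toModule_lof R (ι := {j // d j = d i}) (M := fun j => X j) ⟨i, rfl⟩ x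

variable [DecidableEq κ]

variable (R X d) in
/-- A direct sum, regrouped along the fibers of `d : ι → κ`. -/
def directSumFiberEquiv : (⨁ i, X i) ≃ₗ[R] ⨁ n, ⨁ i : {i // d i = n}, X i :=
  LinearEquiv.ofLinearMap
    (DirectSum.toModule R ι _ fun i =>
      DirectSum.lof R κ (fun n => ⨁ i : {i // d i = n}, X i) (d i) ∘ₗ
        DirectSum.lof R {j // d j = d i} (fun j => X j) ⟨i, rfl⟩)
    (DirectSum.toModule R κ _ fun n => DirectSum.toModule R {i // d i = n} _ fun i =>
      DirectSum.lof R ι X i)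
    (by ext n ⟨i, rfl⟩ x : 3; simp)
    (by ext i x : 2; simp)

theorem directSumFiberEquiv_lof (i : ι) (x : X i) :
    directSumFiberEquiv R X d (DirectSum.lof R ι X i x) =
      DirectSum.lof R κ (fun n => ⨁ i : {i // d i = n}, X i) (d i)
        (DirectSum.lof R {j // d j = d i} (fun j => X j) ⟨i, rfl⟩ x) := by
  simp [directSumFiberEquiv]

theorem lmap_homogeneousPart_comp_directSumFiberEquiv [DirectSum.Decomposition 𝒜]
    (hf : ∀ i x, f i x ∈ 𝒜 (d i)) :
    DirectSum.lmap (homogeneousPart hf) ∘ₗ (directSumFiberEquiv R X d).toLinearMap =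
      (DirectSum.decomposeLinearEquiv 𝒜).toLinearMap ∘ₗ DirectSum.toModule R ι A f := by
  refine DirectSum.linearMap_ext R fun i => LinearMap.ext fun x => ?_
  simp only [LinearMap.comp_apply, LinearEquiv.coe_coe, directSumFiberEquiv_lof,
    DirectSum.lmap_lof, homogeneousPart_lof, DirectSum.toModule_lof,
    DirectSum.decomposeLinearEquiv_apply, DirectSum.decompose_of_mem 𝒜 (hf i x)]
  exact DirectSum.lof_eq_of R ..

theorem homogeneousPart_bijective [DirectSum.Decomposition 𝒜] (hf : ∀ i x, f i x ∈ 𝒜 (d i))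
    (h : Function.Bijective (DirectSum.toModule R ι A f)) (n : κ) :
    Function.Bijective (homogeneousPart hf n) := by
  have h_lmap : Function.Bijective (DirectSum.lmap (homogeneousPart hf)) := by
    rw [← (directSumFiberEquiv R X d).bijective.of_comp_iff, ← LinearEquiv.coe_toLinearMap,
      ← LinearMap.coe_comp, lmap_homogeneousPart_comp_directSumFiberEquiv hf]
    exact (DirectSum.decomposeLinearEquiv 𝒜).bijective.comp h
  exact ⟨(DirectSum.lmap_injective _).1 h_lmap.1 n, (DirectSum.lmap_surjective _).1 h_lmap.2 n⟩

end HomogeneousPart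

section TensorProduct

variable {R A B ι κ : Type*} [CommSemiring R] [AddCommMonoid A] [Module R A] [AddCommMonoid B]
  [Module R B] [DecidableEq ι] [DecidableEq κ]

theorem toModule_mapIncl_bijective (𝒜 : ι → Submodule R A) (ℬ : κ → Submodule R B)
    [DirectSum.Decomposition 𝒜] [DirectSum.Decomposition ℬ] :
    Function.Bijective (DirectSum.toModule R (ι × κ) (A ⊗[R] B) fun ij =>
      TensorProduct.mapIncl (𝒜 ij.1) (ℬ ij.2)) := by
  let e := (TensorProduct.directSum R R (fun i => 𝒜 i) (fun j => ℬ j)).symm ≪≫ₗ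
    (TensorProduct.congr (DirectSum.decomposeLinearEquiv 𝒜)
      (DirectSum.decomposeLinearEquiv ℬ)).symm
  have h : (DirectSum.toModule R (ι × κ) (A ⊗[R] B) fun ij =>
      TensorProduct.mapIncl (𝒜 ij.1) (ℬ ij.2)) = e.toLinearMap := by
    ext ⟨i, j⟩ a b
    simp [e, TensorProduct.mapIncl]
  rw [h]
  exact e.bijective

end TensorProduct

section CliffordAlgebra

variable {R M₁ M₂ M : Type*} [CommRing R] [AddCommGroup M₁] [Module R M₁] [AddCommGroup M₂]
  [Module R M₂] [AddCommGroup M] [Module R M] {Q₁ : QuadraticForm R M₁} {Q₂ : QuadraticForm R M₂}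
  {Q : QuadraticForm R M}

/-- The map `a ⊗ b ↦ f a * g b` between Clifford algebras, for isometries `f` and `g` with a common
codomain. It is only linear: the usual tensor product carries no Koszul signs. -/
def cliffordMul (f : Q₁ →qᵢ Q) (g : Q₂ →qᵢ Q) :
    CliffordAlgebra Q₁ ⊗[R] CliffordAlgebra Q₂ →ₗ[R] CliffordAlgebra Q :=
  LinearMap.mul' R _ ∘ₗ TensorProduct.map (CliffordAlgebra.map f).toLinearMap
    (CliffordAlgebra.map g).toLinearMap

theorem cliffordMul_bijective (e : (Q₁.prod Q₂).IsometryEquiv Q) :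
    Function.Bijective
      (cliffordMul (e.toIsometry.comp (.inl Q₁ Q₂)) (e.toIsometry.comp (.inr Q₁ Q₂))) := by
  let E := GradedTensorProduct.of R (CliffordAlgebra.evenOdd Q₁) (CliffordAlgebra.evenOdd Q₂) ≪≫ₗ
    (CliffordAlgebra.prodEquiv Q₁ Q₂).symm.toLinearEquiv ≪≫ₗ
    (CliffordAlgebra.equivOfIsometry e).toLinearEquiv
  have h : cliffordMul (e.toIsometry.comp (.inl Q₁ Q₂)) (e.toIsometry.comp (.inr Q₁ Q₂)) =
      E.toLinearMap := TensorProduct.ext' fun a b => calc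
    _ = CliffordAlgebra.map e.toIsometry (CliffordAlgebra.map (.inl Q₁ Q₂) a) *
        CliffordAlgebra.map e.toIsometry (CliffordAlgebra.map (.inr Q₁ Q₂) b) := by
      simp [cliffordMul, ← CliffordAlgebra.map_comp_map]
    _ = E (a ⊗ₜ b) := (map_mul _ _ _).symm
  rw [h]
  exact E.bijective

end CliffordAlgebra

section ExteriorAlgebra

variable {R M N : Type*} [CommRing R] [AddCommGroup M] [Module R M] [AddCommGroup N] [Module R N]

theorem exteriorAlgebra_map_mem_exteriorPower (f : M →ₗ[R] N) {n : ℕ} {a : ExteriorAlgebra R M}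
    (ha : a ∈ ⋀[R]^n M) : ExteriorAlgebra.map f a ∈ ⋀[R]^n N := by
  have h : ExteriorAlgebra.map f a ∈ (⋀[R]^n M).map (ExteriorAlgebra.map f).toLinearMap :=
    Submodule.mem_map_of_mem ha
  rw [Submodule.map_pow, ExteriorAlgebra.ι_range_map_map] at h
  exact pow_le_pow_left' LinearMap.map_le_range n h

variable (R M N)

/-- The map `a ⊗ b ↦ a ∧ b` from the exterior algebras of `M` and `N` to that of `M × N`. -/
noncomputable def exteriorProdMul :
    ExteriorAlgebra R M ⊗[R] ExteriorAlgebra R N →ₗ[R] ExteriorAlgebra R (M × N) :=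
  LinearMap.mul' R _ ∘ₗ TensorProduct.map (ExteriorAlgebra.map (.inl R M N)).toLinearMap
    (ExteriorAlgebra.map (.inr R M N)).toLinearMap

theorem exteriorProdMul_bijective : Function.Bijective (exteriorProdMul R M N) :=
  let e : (QuadraticMap.prod (0 : QuadraticForm R M) (0 : QuadraticForm R N)).IsometryEquiv
      (0 : QuadraticForm R (M × N)) :=
    { LinearEquiv.refl R (M × N) with map_app' := fun x => by simp }
  cliffordMul_bijective e

/-- The map `a ⊗ b ↦ a ∧ b` from `⋀^p M ⊗ ⋀^q N` to the exterior algebra of `M × N`. -/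
noncomputable def exteriorPowerProdMul (pq : ℕ × ℕ) :
    (⋀[R]^pq.1 M) ⊗[R] (⋀[R]^pq.2 N) →ₗ[R] ExteriorAlgebra R (M × N) :=
  exteriorProdMul R M N ∘ₗ TensorProduct.mapIncl (⋀[R]^pq.1 M) (⋀[R]^pq.2 N)

theorem exteriorPowerProdMul_mem (pq : ℕ × ℕ) (t : (⋀[R]^pq.1 M) ⊗[R] (⋀[R]^pq.2 N)) :
    exteriorPowerProdMul R M N pq t ∈ ⋀[R]^(pq.1 + pq.2) (M × N) := by
  induction t with
  | zero => simp only [map_zero, zero_mem]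
  | add s t hs ht => simpa only [map_add] using add_mem hs ht
  | tmul a b =>
    exact SetLike.mul_mem_graded (exteriorAlgebra_map_mem_exteriorPower _ a.2)
      (exteriorAlgebra_map_mem_exteriorPower _ b.2)

theorem toModule_exteriorPowerProdMul_bijective :
    Function.Bijective (DirectSum.toModule R (ℕ × ℕ) _ (exteriorPowerProdMul R M N)) := by
  have h : DirectSum.toModule R (ℕ × ℕ) _ (exteriorPowerProdMul R M N) =
      exteriorProdMul R M N ∘ₗ DirectSum.toModule R (ℕ × ℕ) _ fun pq =>
        TensorProduct.mapIncl (⋀[R]^pq.1 M) (⋀[R]^pq.2 N) := by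
    refine DirectSum.linearMap_ext R fun pq => LinearMap.ext fun t => ?_
    simp only [LinearMap.comp_apply, DirectSum.toModule_lof, exteriorPowerProdMul]
  rw [h]
  exact (exteriorProdMul_bijective R M N).comp
    (toModule_mapIncl_bijective (fun p => ⋀[R]^p M) fun q => ⋀[R]^q N)

end ExteriorAlgebra

/-- The `n`-th exterior power of a product module `M × N` is `R`-linearly isomorphic to the
direct sum, over pairs `(p, q)` with `p + q = n`, of `(⋀[R]^p M) ⊗[R] (⋀[R]^q N)`. -/
theorem stmt8 (R : Type*) [CommRing R] (M N : Type*)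
    [AddCommGroup M] [Module R M] [AddCommGroup N] [Module R N] (n : ℕ) :
    Nonempty ((⋀[R]^n (M × N)) ≃ₗ[R]
      DirectSum {pq : ℕ × ℕ // pq.1 + pq.2 = n}
        fun pq => TensorProduct R (⋀[R]^pq.1.1 M) (⋀[R]^pq.1.2 N)) := by
  have h_bij := homogeneousPart_bijective (𝒜 := fun i => ⋀[R]^i (M × N))
    (exteriorPowerProdMul_mem R M N) (toModule_exteriorPowerProdMul_bijective R M N) n
  exact ⟨(LinearEquiv.ofBijective _ h_bij).symm⟩
end

section
/- Let n be a natural number and G = Equiv.Perm (Fin n) the symmetric group. For every finite-dimensional complex representation V of G, the character of V, viewed as a function G → ℂ, lies in the ℤ-submodule of functions G → ℂ spanned by the permutation characters χ_H : g ↦ (the number of fixed points of g acting on the coset space G ⧸ H by left multiplication), where H ranges over all subgroups of G. -/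
/-!
Class functions on `Perm α` form a space whose dimension is at most the number of partitions `p` of
`card α`. For each `p`, fill the Young diagram of `p` bijectively with the elements of `α`; let
`R p` and `C p` be the subgroups preserving the rows and the columns, and let `E p` send a class
function to the multiplicity of the sign character in its restriction to `C p`. On characters `E p`
is an integer, so it suffices that the integer matrix `E p (permCharacter (R q))` is invertible.

By Mackey's formula this entry is `(#(C p))⁻¹` times the sum over the cosets `g R q` of the sum of
the signs of the elements of `C p ∩ g R q g⁻¹`. The inner sum vanishes if this intersection contains
a transposition. Otherwise the intersection is trivial, and the elements of each column of `p` lie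
in distinct rows of the `g`-translate of the tableau of `q`. As the row indices in each column are
then at least `0, 1, 2, …` in some order, this forces `rowWeight q ≥ rowWeight p`, with equality
only if `q = p` and `g ∈ C p * R p`. Hence the matrix is unitriangular for the order given by
`rowWeight`.
-/

open Equiv Finset Module MulAction

theorem subset_of_sum_le_sum {ι R : Type*} [AddCommGroup R] [LinearOrder R] [IsOrderedAddMonoid R]
    {w : ι → R} {s t : Finset ι} (hs : ∀ x, x ∈ s ↔ w x < 0)
    (h : ∑ x ∈ t, w x ≤ ∑ x ∈ s, w x) : s ⊆ t := by
  classical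
  by_contra hst
  have hneg : ∑ x ∈ s \ t, w x < 0 :=
    sum_neg (fun x hx ↦ (hs x).mp (mem_sdiff.mp hx).1) (sdiff_nonempty.mpr hst)
  have hnonneg : 0 ≤ ∑ x ∈ t \ s, w x :=
    sum_nonneg fun x hx ↦ not_lt.mp fun hw ↦ (mem_sdiff.mp hx).2 ((hs x).mpr hw)
  exact (hneg.trans_le hnonneg).not_ge (sum_sdiff_le_sum_sdiff.mpr h)

section LinearAlgebra

theorem isUnit_of_unitriangular {R ι γ : Type*} [CommRing R] [Fintype ι] [DecidableEq ι]
    [LinearOrder γ] {M : Matrix ι ι R} (s : ι → γ) (hdiag : ∀ i, M i i = 1)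
    (hoff : ∀ i j, i ≠ j → s j ≤ s i → M i j = 0) : IsUnit M := by
  have htri : M.BlockTriangular s := fun i j hij ↦ hoff i j (fun h ↦ hij.ne' (congrArg s h)) hij.le
  have hblock (a : γ) : M.toSquareBlock s a = 1 := by
    ext ⟨i, hi⟩ ⟨j, hj⟩
    rcases eq_or_ne i j with rfl | hij
    · simp [Matrix.toSquareBlock_def, hdiag]
    · simp [Matrix.toSquareBlock_def, hij, hoff i j hij (hj.trans hi.symm).le]
  rw [Matrix.isUnit_iff_isUnit_det, htri.det]
  simp only [hblock, Matrix.det_one, prod_const_one, isUnit_one]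

theorem mem_span_int_of_integral_coordinates {k V ι : Type*} [Field k] [AddCommGroup V]
    [Module k V] [Fintype ι] [DecidableEq ι] {W : Submodule k V} [FiniteDimensional k W]
    (hW : finrank k W ≤ Fintype.card ι) (E : V →ₗ[k] ι → k) {v : ι → V} (hv : ∀ i, v i ∈ W)
    {M : Matrix ι ι ℤ} (hM : IsUnit M) (hE : ∀ i j, E (v j) i = M i j)
    {f : V} (hf : f ∈ W) {z : ι → ℤ} (hz : ∀ i, E f i = z i) :
    f ∈ Submodule.span ℤ (Set.range v) := by
  obtain ⟨N, hMN, -⟩ := isUnit_iff_exists.mp hM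
  have mem_W (a : ι → k) : ∑ j, a j • v j ∈ W := sum_mem fun j _ ↦ W.smul_mem _ (hv j)
  have E_sum (a : ι → k) : E (∑ j, a j • v j) = (M.map (Int.castRingHom k)).mulVec a := by
    ext i
    simp [Matrix.mulVec, dotProduct, hE, mul_comm]
  have E_sum_N (a : ι → k) : E (∑ j, (N.map (Int.castRingHom k)).mulVec a j • v j) = a := by
    rw [E_sum, Matrix.mulVec_mulVec, ← Matrix.map_mul, hMN,
      Matrix.map_one _ (map_zero _) (map_one _), Matrix.one_mulVec]
  have hsurj : Function.Surjective (E ∘ₗ W.subtype) := fun a ↦ ⟨⟨_, mem_W _⟩, E_sum_N a⟩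
  have hinj : Function.Injective (E ∘ₗ W.subtype) :=
    (LinearMap.injective_iff_surjective_of_finrank_eq_finrank (le_antisymm
      (hW.trans_eq (finrank_fintype_fun_eq_card k).symm)
      (LinearMap.finrank_le_finrank_of_surjective hsurj))).mpr hsurj
  have hfsum : f = ∑ j, (N.map (Int.castRingHom k)).mulVec (fun i ↦ (z i : k)) j • v j :=
    congrArg Subtype.val (@hinj ⟨f, hf⟩ ⟨_, mem_W _⟩ ((funext hz).trans (E_sum_N _).symm))
  have hcoeff (j : ι) : (N.map (Int.castRingHom k)).mulVec (fun i ↦ (z i : k)) j =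
      (N.mulVec z j : ℤ) := (RingHom.map_mulVec (Int.castRingHom k) N z j).symm
  rw [hfsum]
  simp only [hcoeff, Int.cast_smul_eq_zsmul]
  exact sum_mem fun j _ ↦ Submodule.smul_mem _ _ (Submodule.subset_span ⟨j, rfl⟩)

end LinearAlgebra

section Characters

variable (k : Type*) {G : Type*} [Field k] [Group G]

/-- The character of the permutation representation of `G` on `G ⧸ H`, given by its values, the
numbers of fixed points. -/
noncomputable def permCharacter (H : Subgroup G) (g : G) : k :=
  Nat.card {x : G ⧸ H // g • x = x}

variable (G) in
/-- The space of `k`-valued class functions on `G`, as the functions factoring through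
`ConjClasses G`. -/
def classFunctions : Submodule k (G → k) :=
  LinearMap.range (LinearMap.funLeft k k (ConjClasses.mk : G → ConjClasses G))

variable {k}

theorem finrank_classFunctions_le [Finite (ConjClasses G)] :
    finrank k (classFunctions k G) ≤ Nat.card (ConjClasses G) := by
  have := Fintype.ofFinite (ConjClasses G)
  rw [Nat.card_eq_fintype_card, ← finrank_fintype_fun_eq_card k]
  exact LinearMap.finrank_range_le _

theorem character_mem_classFunctions {V : Type*} [AddCommGroup V] [Module k V]
    (ρ : Representation k G V) : ρ.character ∈ classFunctions k G := by
  refine ⟨Quotient.lift ρ.character fun a b (hab : IsConj a b) ↦ ?_, rfl⟩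
  obtain ⟨c, rfl⟩ := isConj_iff.mp hab
  exact (ρ.char_conj a c).symm

theorem character_ofMulAction {X : Type*} [Finite X] [MulAction G X] (g : G) :
    (Representation.ofMulAction k G X).character g = Nat.card {x : X // g • x = x} := by
  classical
  have := Fintype.ofFinite X
  let b : Basis X k (MonoidAlgebra k X) := .ofRepr (MonoidAlgebra.coeffLinearEquiv k)
  rw [Representation.character, LinearMap.trace_eq_matrix_trace k b, Matrix.trace]
  have hb (x : X) : b x = MonoidAlgebra.single x 1 := rfl
  simp [LinearMap.toMatrix_apply, hb, b, Finsupp.single_apply, Fintype.card_subtype]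

theorem permCharacter_eq_character (H : Subgroup G) [Finite (G ⧸ H)] :
    permCharacter k H = (Representation.ofMulAction k G (G ⧸ H)).character :=
  funext fun g ↦ (character_ofMulAction g).symm

theorem permCharacter_mem_classFunctions (H : Subgroup G) [Finite (G ⧸ H)] :
    permCharacter k H ∈ classFunctions k G :=
  permCharacter_eq_character (k := k) H ▸ character_mem_classFunctions _

theorem character_lmul_comp (ψ : G →* k) :
    Representation.character (V := k) ((Algebra.lmul k k : k →* End k k).comp ψ) = ψ :=
  funext fun g ↦ Algebra.trace_self_apply (ψ g)

/-- The multiplicity of the linear character `ψ` in the restriction to `H` of a class function `f`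
on `G`, defined as the pairing `(#H)⁻¹ * ∑ h, ψ h * f h⁻¹`. It makes sense for every function `f`
and is linear in `f`. -/
noncomputable def linCharMultiplicity (ψ : G →* k) (H : Subgroup G) [Fintype H] :
    (G → k) →ₗ[k] k :=
  (Nat.card H : k)⁻¹ • ∑ h : H, ψ h • LinearMap.proj (h⁻¹ : G)

theorem linCharMultiplicity_apply (ψ : G →* k) (H : Subgroup G) [Fintype H] (f : G → k) :
    linCharMultiplicity ψ H f = (Nat.card H : k)⁻¹ * ∑ h : H, ψ h * f (h⁻¹ : G) := by
  simp only [linCharMultiplicity, LinearMap.smul_apply, LinearMap.sum_apply, LinearMap.proj_apply,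
    smul_eq_mul]

theorem exists_int_linCharMultiplicity_character [CharZero k] (ψ : G →* k) (H : Subgroup G)
    [Fintype H] {V : Type*} [AddCommGroup V] [Module k V] [FiniteDimensional k V]
    (ρ : Representation k G V) : ∃ z : ℤ, linCharMultiplicity ψ H ρ.character = z := by
  have : Invertible (Nat.card H : k) := invertibleOfNonzero (Nat.cast_ne_zero.mpr Nat.card_pos.ne')
  let ψH : Representation k H k := (Algebra.lmul k k : k →* End k k).comp (ψ.comp H.subtype)
  have h := Representation.card_inv_mul_sum_char_mul_char_eq_finrank (ρ.comp H.subtype) ψH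
  rw [character_lmul_comp] at h
  refine ⟨(finrank k (Representation.IntertwiningMap (ρ.comp H.subtype) ψH) : ℕ), ?_⟩
  rw [linCharMultiplicity_apply, Int.cast_natCast]
  exact h

theorem exists_int_linCharMultiplicity_permCharacter [CharZero k] (ψ : G →* k) (H K : Subgroup G)
    [Fintype H] [Finite (G ⧸ K)] :
    ∃ z : ℤ, linCharMultiplicity ψ H (permCharacter k K) = z :=
  permCharacter_eq_character (k := k) K ▸ exists_int_linCharMultiplicity_character ψ H _

theorem sum_mul_card_fixedPoints {R X : Type*} [CommSemiring R] [Fintype G] [Fintype X]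
    [MulAction G X] (ψ : G → R) [∀ x : X, Fintype (stabilizer G x)] :
    ∑ g : G, ψ g * Nat.card {x : X // g⁻¹ • x = x} = ∑ x : X, ∑ g : stabilizer G x, ψ g := by
  classical
  have hcard (g : G) : (Nat.card {x : X // g⁻¹ • x = x} : R) =
      ∑ x : X, if g ∈ stabilizer G x then 1 else 0 := by
    simp only [sum_boole, Nat.card_eq_fintype_card, Fintype.card_subtype, mem_stabilizer_iff,
      inv_smul_eq_iff, eq_comm (b := g • _)]
  simp only [hcard, mul_sum, mul_ite, mul_one, mul_zero]
  rw [sum_comm]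
  refine sum_congr rfl fun x _ ↦ ?_
  rw [← sum_filter]
  exact sum_subtype _ (fun g ↦ by simp) ψ

theorem linCharMultiplicity_permCharacter (ψ : G →* k) (H K : Subgroup G) [Fintype H]
    [Fintype (G ⧸ K)] [∀ x : G ⧸ K, Fintype (stabilizer H x)] :
    linCharMultiplicity ψ H (permCharacter k K) =
      (Nat.card H : k)⁻¹ * ∑ x : G ⧸ K, ∑ h : stabilizer H x, ψ (h : H) := by
  rw [linCharMultiplicity_apply, ← sum_mul_card_fixedPoints (G := H) (fun h : H ↦ ψ h)]
  rfl

end Characters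

section YoungSubgroups

variable {α β γ : Type*}

/-- The Young subgroup of the partition of `α` into the fibres of `c`: the permutations preserving
each fibre. -/
def youngSubgroup (c : α → β) : Subgroup (Perm α) where
  carrier := {σ | ∀ i, c (σ i) = c i}
  mul_mem' := fun {σ τ} hσ hτ i ↦ (hσ (τ i)).trans (hτ i)
  one_mem' _ := rfl
  inv_mem' := fun {σ} hσ i ↦ by simpa using (hσ (σ⁻¹ i)).symm

theorem mem_youngSubgroup {c : α → β} {σ : Perm α} :
    σ ∈ youngSubgroup c ↔ ∀ i, c (σ i) = c i := Iff.rfl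

theorem smul_mk_youngSubgroup (c : α → β) (d : α → γ) (h : youngSubgroup d) (g : Perm α) :
    h • (g : Perm α ⧸ youngSubgroup c) = ((h * g : Perm α) : Perm α ⧸ youngSubgroup c) := rfl

theorem mem_stabilizer_youngSubgroup {c : α → β} {d : α → γ} {g : Perm α} {h : youngSubgroup d} :
    h ∈ stabilizer (youngSubgroup d) (g : Perm α ⧸ youngSubgroup c) ↔
      (h : Perm α) ∈ youngSubgroup fun i ↦ c (g⁻¹ i) := by
  rw [mem_stabilizer_iff, smul_mk_youngSubgroup, eq_comm, QuotientGroup.eq, mem_youngSubgroup,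
    mem_youngSubgroup, ← g.forall_congr_right (q := fun i ↦ c (g⁻¹ ((h : Perm α) i)) = c (g⁻¹ i))]
  simp

theorem stabilizer_youngSubgroup_eq_bot {c : α → β} {d : α → γ} {g : Perm α}
    (hinj : Function.Injective fun i ↦ (c (g⁻¹ i), d i)) :
    stabilizer (youngSubgroup d) (g : Perm α ⧸ youngSubgroup c) = ⊥ :=
  (Subgroup.eq_bot_iff_forall _).mpr fun h hh ↦ Subtype.ext <| Equiv.ext fun i ↦
    hinj (Prod.ext (mem_stabilizer_youngSubgroup.mp hh i) (h.2 i))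

variable [Fintype α] [DecidableEq α] {k : Type*} [CommRing k]

variable (α k) in
/-- The sign character of `Perm α` with values in `k`. -/
def signChar : Perm α →* k :=
  (Int.castRingHom k : ℤ →* k).comp ((Units.coeHom ℤ).comp Perm.sign)

open scoped Classical in
theorem sum_signChar_stabilizer [IsDomain k] [CharZero k] (c : α → β) (d : α → γ) (g : Perm α)
    [Fintype (stabilizer (youngSubgroup d) (g : Perm α ⧸ youngSubgroup c))] :
    ∑ h : stabilizer (youngSubgroup d) (g : Perm α ⧸ youngSubgroup c),
        signChar α k (h : youngSubgroup d) =
      if Function.Injective fun i ↦ (c (g⁻¹ i), d i) then 1 else 0 := by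
  let S := stabilizer (youngSubgroup d) (g : Perm α ⧸ youngSubgroup c)
  let ψ : S →* k := ((signChar α k).comp (youngSubgroup d).subtype).comp S.subtype
  change ∑ h, ψ h = _
  split_ifs with hinj
  · have hone (h : S) : h = 1 := Subtype.ext <|
      (Subgroup.eq_bot_iff_forall S).mp (stabilizer_youngSubgroup_eq_bot hinj) h h.2
    rw [Fintype.sum_eq_single 1 fun h hh ↦ absurd (hone h) hh, map_one]
  · simp only [Function.Injective, Prod.mk.injEq, not_forall] at hinj
    obtain ⟨i, j, ⟨hc, hd⟩, hij⟩ := hinj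
    let t : youngSubgroup d := ⟨swap i j, apply_swap_eq_self hd⟩
    have ht : t ∈ S := mem_stabilizer_youngSubgroup.mpr
      (apply_swap_eq_self (v := fun i ↦ c (g⁻¹ i)) hc)
    have hψt : ψ ⟨t, ht⟩ = -1 := by simp [ψ, t, signChar, Perm.sign_swap hij]
    refine sum_hom_units_eq_zero ψ fun hψ ↦ ?_
    rw [hψ, MonoidHom.one_apply] at hψt
    norm_num at hψt

end YoungSubgroups

section Tableaux

variable {α : Type*} {μ ν : YoungDiagram}

/-- The row of the entry `i` in the tableau `T`, a tableau of shape `μ` being encoded as a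
bijection from its entries to the cells of `μ`. -/
def rowIndex (T : α ≃ μ.cells) (i : α) : ℕ := (T i : ℕ × ℕ).1

/-- The column of the entry `i` in the tableau `T`. -/
def colIndex (T : α ≃ μ.cells) (i : α) : ℕ := (T i : ℕ × ℕ).2

/-- The sum of the row indices of the cells of `μ`, which is the statistic `n(μ) = ∑ i * μᵢ` with
rows numbered from `0`. -/
def rowWeight (μ : YoungDiagram) : ℕ := ∑ x ∈ μ.cells, x.1

theorem injective_rowIndex_colIndex (T : α ≃ μ.cells) :
    Function.Injective fun i ↦ (rowIndex T i, colIndex T i) :=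
  Subtype.val_injective.comp T.injective

theorem sum_comp_tableau [Fintype α] (T : α ≃ μ.cells) {M : Type*} [AddCommMonoid M]
    (w : ℕ × ℕ → M) : ∑ i, w (T i) = ∑ x ∈ μ.cells, w x := by
  rw [T.sum_comp (fun x ↦ w x), sum_coe_sort]

theorem sum_rowIndex [Fintype α] (T : α ≃ μ.cells) : ∑ i, rowIndex T i = rowWeight μ :=
  sum_comp_tableau T Prod.fst

theorem card_filter_rowIndex_eq [Fintype α] (T : α ≃ μ.cells) (a : ℕ) :
    #{i | rowIndex T i = a} = μ.rowLen a := by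
  rw [YoungDiagram.rowLen_eq_card, YoungDiagram.row, card_filter, card_filter]
  exact sum_comp_tableau T fun x ↦ if x.1 = a then 1 else 0

theorem eq_of_rowIndex_eq_comp {T : α ≃ μ.cells} {U : α ≃ ν.cells} {σ : Perm α}
    (h : ∀ i, rowIndex U i = rowIndex T (σ i)) : ν = μ := by
  have := Fintype.ofEquiv _ T.symm
  have hrow (a : ℕ) : ν.rowLen a = μ.rowLen a := by
    rw [← card_filter_rowIndex_eq U, ← card_filter_rowIndex_eq T]
    exact card_equiv σ (by simp [h])
  ext ⟨a, b⟩
  simp only [YoungDiagram.mem_cells, YoungDiagram.mem_iff_lt_rowLen, hrow]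

theorem mem_cells_of_sum_le_rowWeight [Fintype α] (T : α ≃ μ.cells) {b : α → ℕ}
    (hb : Function.Injective fun i ↦ (b i, colIndex T i)) (hle : ∑ i, b i ≤ rowWeight μ) (i : α) :
    (b i, colIndex T i) ∈ μ.cells := by
  -- `w` is negative exactly on `μ`, so `μ` is the only minimiser of the sum of `w` among the sets
  -- of `#μ` cells; the term `colLen` has the same sum over `μ` and over the cells `(b i, col i)`.
  let w (x : ℕ × ℕ) : ℤ := x.1 - μ.colLen x.2
  have hw (x : ℕ × ℕ) : x ∈ μ.cells ↔ w x < 0 := by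
    rw [YoungDiagram.mem_cells, YoungDiagram.mem_iff_lt_colLen, sub_neg, Nat.cast_lt]
  have hsum : ∑ x ∈ univ.map ⟨_, hb⟩, w x ≤ ∑ x ∈ μ.cells, w x := by
    rw [← sum_comp_tableau T, sum_map]
    simp only [w, sum_sub_distrib, Function.Embedding.coeFn_mk]
    rw [← sum_rowIndex T] at hle
    exact sub_le_sub_right (by exact_mod_cast hle) _
  have hcard : #(univ.map ⟨_, hb⟩) = #μ.cells := by
    rw [card_map, card_univ, Fintype.card_congr T, Fintype.card_coe]
  rw [eq_of_subset_of_card_le (subset_of_sum_le_sum hw hsum) hcard.le]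
  exact mem_map_of_mem ⟨_, hb⟩ (mem_univ i)

theorem exists_eq_rowIndex_comp [Fintype α] (T : α ≃ μ.cells) {b : α → ℕ}
    (hb : Function.Injective fun i ↦ (b i, colIndex T i)) (hle : ∑ i, b i ≤ rowWeight μ) :
    ∃ τ ∈ youngSubgroup (colIndex T), ∀ i, b i = rowIndex T (τ i) := by
  let τ (i : α) : α := T.symm ⟨_, mem_cells_of_sum_le_rowWeight T hb hle i⟩
  have hτ : Function.Bijective τ := Finite.injective_iff_bijective.mp
    (T.symm.injective.comp fun i j hij ↦ hb (congrArg Subtype.val hij))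
  exact ⟨.ofBijective τ hτ, fun i ↦ by simp [colIndex, τ], fun i ↦ by simp [rowIndex, τ]⟩

theorem exists_rowIndex_comp_eq_rowIndex_comp {T : α ≃ μ.cells} {U : α ≃ ν.cells} {σ : Perm α}
    (hle : rowWeight ν ≤ rowWeight μ)
    (hinj : Function.Injective fun i ↦ (rowIndex U (σ i), colIndex T i)) :
    ∃ τ ∈ youngSubgroup (colIndex T), ∀ i, rowIndex U (σ i) = rowIndex T (τ i) := by
  have := Fintype.ofEquiv _ T.symm
  exact exists_eq_rowIndex_comp T hinj
    (((Equiv.sum_comp σ (rowIndex U)).trans (sum_rowIndex U)).trans_le hle)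

theorem injective_rowIndex_colIndex_iff_mem_orbit {T : α ≃ μ.cells} {g : Perm α} :
    (Function.Injective fun i ↦ (rowIndex T (g⁻¹ i), colIndex T i)) ↔
      (g : Perm α ⧸ youngSubgroup (rowIndex T)) ∈
        orbit (youngSubgroup (colIndex T)) ((1 : Perm α) : Perm α ⧸ _) := by
  constructor
  · intro hinj
    obtain ⟨τ, hτ, hrow⟩ := exists_rowIndex_comp_eq_rowIndex_comp le_rfl hinj
    refine ⟨(⟨τ, hτ⟩ : youngSubgroup (colIndex T))⁻¹, QuotientGroup.eq.mpr fun i ↦ ?_⟩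
    simpa using (hrow (g i)).symm
  · rintro ⟨h, hh⟩
    have hrow (i : α) : rowIndex T (g⁻¹ i) = rowIndex T ((h⁻¹ : Perm α) i) := by
      have hmem : (h * 1 : Perm α)⁻¹ * g ∈ youngSubgroup (rowIndex T) := QuotientGroup.eq.mp hh
      simpa using (hmem (g⁻¹ i)).symm
    have hcol (i : α) : colIndex T ((h⁻¹ : Perm α) i) = colIndex T i := inv_mem h.2 i
    have hcomp : (fun i ↦ (rowIndex T (g⁻¹ i), colIndex T i)) =
        (fun i ↦ (rowIndex T i, colIndex T i)) ∘ (h⁻¹ : Perm α) :=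
      funext fun i ↦ Prod.ext (hrow i) (hcol i).symm
    rw [hcomp]
    exact (injective_rowIndex_colIndex T).comp (h⁻¹ : Perm α).injective

end Tableaux

section SignMultiplicities

variable {α k : Type*} [Fintype α] [DecidableEq α] [Field k] [CharZero k] {μ ν : YoungDiagram}

theorem linCharMultiplicity_signChar_eq_zero (T : α ≃ μ.cells) (U : α ≃ ν.cells)
    [Fintype (youngSubgroup (colIndex T))] (hne : ν ≠ μ) (hle : rowWeight ν ≤ rowWeight μ) :
    linCharMultiplicity (signChar α k) (youngSubgroup (colIndex T))
      (permCharacter k (youngSubgroup (rowIndex U))) = 0 := by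
  classical
  rw [linCharMultiplicity_permCharacter, sum_eq_zero, mul_zero]
  rintro ⟨g⟩ -
  refine (sum_signChar_stabilizer _ _ g).trans (if_neg fun hinj ↦ hne ?_)
  obtain ⟨τ, -, hrow⟩ := exists_rowIndex_comp_eq_rowIndex_comp hle hinj
  exact eq_of_rowIndex_eq_comp (σ := τ * g) fun i ↦ by simpa using hrow (g i)

theorem linCharMultiplicity_signChar_eq_one (T : α ≃ μ.cells)
    [Fintype (youngSubgroup (colIndex T))] :
    linCharMultiplicity (signChar α k) (youngSubgroup (colIndex T))
      (permCharacter k (youngSubgroup (rowIndex T))) = 1 := by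
  classical
  let C := youngSubgroup (colIndex T)
  let x₀ : Perm α ⧸ youngSubgroup (rowIndex T) := (1 : Perm α)
  have hsum (x : Perm α ⧸ youngSubgroup (rowIndex T)) :
      ∑ h : stabilizer C x, signChar α k (h : C) = if x ∈ orbit C x₀ then 1 else 0 := by
    induction x using QuotientGroup.induction_on with
    | H g => simp only [C, x₀, sum_signChar_stabilizer, injective_rowIndex_colIndex_iff_mem_orbit]
  have hfree : stabilizer C x₀ = ⊥ :=
    stabilizer_youngSubgroup_eq_bot (injective_rowIndex_colIndex T)
  have hcard : #{x | x ∈ orbit C x₀} = Nat.card C := by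
    rw [← Fintype.card_subtype, ← Nat.card_eq_fintype_card, ← Subgroup.index_bot (G := C), ← hfree,
      index_stabilizer]
    rfl
  rw [linCharMultiplicity_permCharacter, sum_congr rfl fun x _ ↦ hsum x, sum_boole, hcard]
  exact inv_mul_cancel₀ (Nat.cast_ne_zero.mpr Nat.card_pos.ne')

end SignMultiplicities

section Partitions

theorem card_cellsOfRowLens (w : List ℕ) : #(YoungDiagram.cellsOfRowLens w) = w.sum := by
  induction w with
  | nil => rfl
  | cons a w ih =>
    rw [YoungDiagram.cellsOfRowLens, card_union_of_disjoint, card_product, card_map, ih]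
    · simp
    · simp [disjoint_left]

/-- The Young diagram whose row lengths are the parts of `p`. -/
def partitionDiagram {n : ℕ} (p : n.Partition) : YoungDiagram :=
  .ofRowLens (p.parts.sort (· ≥ ·)) (Multiset.pairwise_sort _ _).sortedGE

theorem card_partitionDiagram {n : ℕ} (p : n.Partition) : (partitionDiagram p).card = n := by
  refine (card_cellsOfRowLens _).trans ?_
  rw [← Multiset.sum_coe, Multiset.sort_eq, p.parts_sum]

theorem partitionDiagram_injective {n : ℕ} :
    Function.Injective (partitionDiagram : n.Partition → YoungDiagram) := by
  intro p q hpq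
  have hrow (p : n.Partition) : (partitionDiagram p).rowLens = p.parts.sort (· ≥ ·) :=
    YoungDiagram.rowLens_ofRowLens_eq_self fun x hx ↦ p.parts_pos (by simpa using hx)
  ext1
  rw [← Multiset.sort_eq p.parts (· ≥ ·), ← Multiset.sort_eq q.parts (· ≥ ·), ← hrow, ← hrow, hpq]

theorem card_conjClasses_perm_le (α : Type*) [Fintype α] :
    Nat.card (ConjClasses (Perm α)) ≤ Fintype.card (Fintype.card α).Partition := by
  classical
  rw [← Nat.card_eq_fintype_card]
  refine Nat.card_le_card_of_injective (fun C ↦ C.out.partition) fun C D h ↦ ?_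
  exact Quotient.out_equiv_out.mp (Perm.partition_eq_of_isConj.mpr h)

end Partitions

theorem stmt12_general {k α V : Type*} [Field k] [CharZero k] [Finite α] [AddCommGroup V]
    [Module k V] [FiniteDimensional k V] (ρ : Representation k (Perm α) V) :
    ρ.character ∈ Submodule.span ℤ
      (Set.range fun c : α → ℕ ↦ permCharacter k (youngSubgroup c)) := by
  classical
  have := Fintype.ofFinite α
  let T (p : (Fintype.card α).Partition) : α ≃ (partitionDiagram p).cells :=
    Fintype.equivOfCardEq ((card_partitionDiagram p).symm.trans (Fintype.card_coe _).symm)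
  let E : (Perm α → k) →ₗ[k] (Fintype.card α).Partition → k := LinearMap.pi fun p ↦
    linCharMultiplicity (signChar α k) (youngSubgroup (colIndex (T p)))
  choose M hM using fun p q ↦ exists_int_linCharMultiplicity_permCharacter (signChar α k)
    (youngSubgroup (colIndex (T p))) (youngSubgroup (rowIndex (T q)))
  have hM_unit : IsUnit (Matrix.of M) := by
    refine isUnit_of_unitriangular (fun p ↦ rowWeight (partitionDiagram p)) (fun p ↦ ?_)
      fun p q hpq hle ↦ ?_
    · exact_mod_cast (hM p p).symm.trans (linCharMultiplicity_signChar_eq_one (T p))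
    · exact_mod_cast (hM p q).symm.trans (linCharMultiplicity_signChar_eq_zero (T p) (T q)
        (partitionDiagram_injective.ne hpq.symm) hle)
  choose z hz using fun p ↦ exists_int_linCharMultiplicity_character (signChar α k)
    (youngSubgroup (colIndex (T p))) ρ
  have hdim := (finrank_classFunctions_le (k := k)).trans (card_conjClasses_perm_le α)
  exact Submodule.span_mono (Set.range_comp_subset_range (fun p ↦ rowIndex (T p)) _)
    (mem_span_int_of_integral_coordinates hdim E
      (fun p ↦ permCharacter_mem_classFunctions (youngSubgroup (rowIndex (T p)))) hM_unit hM
      (character_mem_classFunctions ρ) hz)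

/-- The character of any finite-dimensional complex representation of the symmetric group
`G = Equiv.Perm (Fin n)` lies in the ℤ-span of the permutation characters
`g ↦ #{x ∈ G ⧸ H | g • x = x}`, where `H` ranges over the subgroups of `G`. -/
theorem stmt12 (n : ℕ) (V : FDRep ℂ (Equiv.Perm (Fin n))) :
    V.character ∈ Submodule.span ℤ
      (Set.range fun H : Subgroup (Equiv.Perm (Fin n)) =>
        (fun g => (Nat.card {x : Equiv.Perm (Fin n) ⧸ H // g • x = x} : ℂ) :
          Equiv.Perm (Fin n) → ℂ)) :=
  Submodule.span_mono (Set.range_comp_subset_range youngSubgroup (permCharacter ℂ))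
    (stmt12_general V.ρ)
end
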